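/- (Integration-by-parts identity underlying Proposition 3.7.) Let φ(y) = (2π)^{−1/2} e^{−y²/2} be the standard normal density. Let g : ℝ → ℝ be bounded and measurable, and let X : ℝ × ℝ → ℝ, (y,z) ↦ X(y,z), be twice continuously differentiable with ∂_y X(y,z) ≥ ε for some ε > 0 and all (y,z). Assume there exist constants C ≥ 0 and m ∈ ℕ such that for all (y,z): |∂_z X(y,z)| ≤ C(1+|y|)^m, |∂²_{yz} X(y,z)| ≤ C(1+|y|)^m, and |∂²_{yy} X(y,z)| ≤ C(1+|y|)^m. Then the function h(z) = ∫_ℝ g(X(y,z)) φ(y) dy is differentiable on ℝ, and for every z, h'(z) = −∫_ℝ g(X(y,z)) · ∂/∂y [ (∂_z X(y,z) / ∂_y X(y,z)) · φ(y) ] dy. In particular, h is smooth even when g is not continuous. -/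

import Mathlib

open MeasureTheory

/-- The standard normal density φ(y) = (2π)^{-1/2} exp(-y²/2). -/
noncomputable def stdGaussPDF (y : ℝ) : ℝ :=
  (Real.sqrt (2 * Real.pi))⁻¹ * Real.exp (-y^2/2)

/-!
For differentiable `G`, differentiation under the integral sign gives `∂_z ∫ G(X) φ dy =
∫ G'(X) ∂_zX φ dy`. Since `G'(X) ∂_zX φ = (∂_zX / ∂_yX) φ · ∂_y[G(X)]`, an integration by parts in
`y` moves the derivative off `G`, and the resulting formula makes sense for merely bounded `g`.

To reach such a `g`, mollify it: `G_n → g` almost everywhere, with a common bound. As `∂_yX ≥ ε`,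
for every `z` the map `y ↦ X(y, z)` pushes Lebesgue measure forward to a measure that is at most
`ε⁻¹` times Lebesgue measure. Almost everywhere convergence of `G_n` therefore makes
`∫ G_n(X) φ dy` and its derivative in `z` converge locally uniformly in `z`, and the limits are
again a function and its derivative.
-/

open Filter Topology Set
open scoped Convolution ENNReal NNReal

variable {E : Type*} [NormedAddCommGroup E]

section AntilipschitzPushforward

theorem antilipschitzWith_of_le_deriv {f : ℝ → ℝ} (hf : Differentiable ℝ f) {ε : ℝ} (hε : 0 < ε)
    (hεf : ∀ x, ε ≤ deriv f x) : AntilipschitzWith (ε⁻¹).toNNReal f := by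
  refine AntilipschitzWith.of_le_mul_dist fun x y => ?_
  rw [Real.coe_toNNReal _ (by positivity), ← div_eq_inv_mul, le_div_iff₀' hε]
  wlog hxy : x ≤ y generalizing x y
  · simpa only [dist_comm] using this y x (le_of_not_ge hxy)
  rw [dist_comm x, dist_comm (f x), Real.dist_eq, Real.dist_eq, abs_of_nonneg (sub_nonneg.2 hxy)]
  exact (mul_sub_le_image_sub_of_le_deriv hf hεf hxy).trans (le_abs_self _)

variable {f : ℝ → ℝ} {κ : ℝ≥0}

theorem map_volume_le_of_antilipschitzWith (hf : AntilipschitzWith κ f) (hfm : Measurable f) :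
    volume.map f ≤ (κ : ℝ≥0∞) • volume := by
  refine Measure.le_iff.2 fun s hs => ?_
  rw [Measure.map_apply hfm hs, ← hausdorffMeasure_real]
  simpa using hf.hausdorffMeasure_preimage_le zero_le_one s

theorem quasiMeasurePreserving_of_antilipschitzWith (hf : AntilipschitzWith κ f)
    (hfm : Measurable f) : Measure.QuasiMeasurePreserving f :=
  ⟨hfm, Measure.absolutelyContinuous_of_le_smul (map_volume_le_of_antilipschitzWith hf hfm)⟩

theorem map_restrict_preimage_le_of_antilipschitzWith (hf : AntilipschitzWith κ f)
    (hfm : Measurable f) {t : Set ℝ} (ht : MeasurableSet t) :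
    (volume.restrict (f ⁻¹' t)).map f ≤ (κ : ℝ≥0∞) • volume.restrict t := by
  rw [← Measure.restrict_map hfm ht, ← Measure.restrict_smul]
  exact Measure.restrict_mono_measure (map_volume_le_of_antilipschitzWith hf hfm) t

theorem integrableOn_comp_of_antilipschitzWith (hf : AntilipschitzWith κ f) (hfm : Measurable f)
    {F : ℝ → E} {t : Set ℝ} (ht : MeasurableSet t) (hF : IntegrableOn F t) :
    IntegrableOn (F ∘ f) (f ⁻¹' t) :=
  ((hF.integrable.smul_measure ENNReal.coe_ne_top).mono_measure
    (map_restrict_preimage_le_of_antilipschitzWith hf hfm ht)).comp_measurable hfm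

theorem setIntegral_comp_le_of_antilipschitzWith (hf : AntilipschitzWith κ f) (hfm : Measurable f)
    {F : ℝ → ℝ} (hF0 : 0 ≤ F) {s t : Set ℝ} (hst : MapsTo f s t) (ht : MeasurableSet t)
    (hF : IntegrableOn F t) : ∫ y in s, F (f y) ≤ κ * ∫ x in t, F x := by
  have hle := map_restrict_preimage_le_of_antilipschitzWith hf hfm ht
  have hFκ := hF.integrable.smul_measure (c := (κ : ℝ≥0∞)) ENNReal.coe_ne_top
  calc ∫ y in s, F (f y)
      ≤ ∫ y in f ⁻¹' t, F (f y) :=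
        setIntegral_mono_set (integrableOn_comp_of_antilipschitzWith hf hfm ht hF)
          (ae_of_all _ fun y => hF0 (f y)) (ae_of_all _ hst)
    _ = ∫ x, F x ∂(volume.restrict (f ⁻¹' t)).map f :=
        (integral_map hfm.aemeasurable (hFκ.mono_measure hle).aestronglyMeasurable).symm
    _ ≤ ∫ x, F x ∂((κ : ℝ≥0∞) • volume.restrict t) :=
        integral_mono_measure hle (ae_of_all _ hF0) hFκ
    _ = κ * ∫ x in t, F x := by
        rw [integral_smul_measure, ENNReal.coe_toReal, smul_eq_mul]

theorem integrable_smul_comp_of_antilipschitzWith [NormedSpace ℝ E] (hf : AntilipschitzWith κ f)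
    (hfm : Measurable f) {g : ℝ → E} (hg : AEStronglyMeasurable g) {c : ℝ}
    (hgc : ∀ᵐ x, ‖g x‖ ≤ c) {u : ℝ → ℝ} (hu : Integrable u) :
    Integrable fun y => u y • g (f y) :=
  have hqmp := quasiMeasurePreserving_of_antilipschitzWith hf hfm
  hu.smul_bdd c (hg.comp_quasiMeasurePreserving hqmp) (hqmp.ae hgc)

end AntilipschitzPushforward

section BoundedConvergence

variable {α : Type*} [MeasurableSpace α] {μ : Measure α}

theorem tendsto_integral_norm_of_tendsto_ae [IsFiniteMeasure μ] {ι : Type*} {l : Filter ι}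
    [l.IsCountablyGenerated] {f : ι → α → E} (hf : ∀ n, AEStronglyMeasurable (f n) μ) {c : ℝ}
    (hfc : ∀ n, ∀ᵐ x ∂μ, ‖f n x‖ ≤ c) (hlim : ∀ᵐ x ∂μ, Tendsto (fun n => f n x) l (𝓝 0)) :
    Tendsto (fun n => ∫ x, ‖f n x‖ ∂μ) l (𝓝 0) := by
  simpa only [norm_zero, integral_zero] using
    tendsto_integral_filter_of_dominated_convergence (fun _ => c)
      (Eventually.of_forall fun n => (hf n).norm)
      (Eventually.of_forall fun n => by simpa only [norm_norm] using hfc n)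
      (integrable_const c) (hlim.mono fun x hx => hx.norm)

theorem integral_abs_mul_norm_le_add {u v : α → ℝ} (hu : Integrable u μ) (hv : Integrable v μ)
    {f : α → E} (hf : AEStronglyMeasurable f μ) {c : ℝ} (hfc : ∀ᵐ x ∂μ, ‖f x‖ ≤ c) :
    ∫ x, |u x| * ‖f x‖ ∂μ ≤ c * (∫ x, |u x - v x| ∂μ) + ∫ x, |v x| * ‖f x‖ ∂μ := by
  have h_int : ∀ {w : α → ℝ}, Integrable w μ → Integrable (fun x => |w x| * ‖f x‖) μ := fun hw =>
    hw.abs.mul_bdd hf.norm (by simpa only [norm_norm] using hfc)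
  have hdiff : Integrable (fun x => c * |u x - v x|) μ := (hu.sub hv).abs.const_mul c
  rw [← integral_const_mul, ← integral_add hdiff (h_int hv)]
  refine integral_mono_ae (h_int hu) (hdiff.add (h_int hv)) ?_
  filter_upwards [hfc] with x hx
  calc |u x| * ‖f x‖ ≤ (|u x - v x| + |v x|) * ‖f x‖ := by
        gcongr
        simpa only [sub_add_cancel] using abs_add_le (u x - v x) (v x)
    _ ≤ c * |u x - v x| + |v x| * ‖f x‖ := by
        rw [add_mul, mul_comm c]
        gcongr

end BoundedConvergence

section UniformConvergence

variable {Z : Type*} [TopologicalSpace Z] {X : ℝ → Z → ℝ} {κ : ℝ≥0} {K : Set Z}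

theorem exists_isCompact_integral_abs_mul_comp_le (hX : Continuous (Function.uncurry X))
    (hXκ : ∀ z, AntilipschitzWith κ fun y => X y z) (hK : IsCompact K) {u : ℝ → ℝ}
    (hu : Continuous u) (hu_supp : HasCompactSupport u) :
    ∃ (A : ℝ) (T : Set ℝ), IsCompact T ∧ ∀ z ∈ K, ∀ F : ℝ → ℝ, 0 ≤ F → LocallyIntegrable F →
      ∫ y, |u y| * F (X y z) ≤ A * ∫ x in T, F x := by
  have hS : IsCompact (tsupport u) := hu_supp
  obtain ⟨b, hb⟩ := hu_supp.exists_bound_of_continuous hu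
  have hT : IsCompact (Function.uncurry X '' tsupport u ×ˢ K) := (hS.prod hK).image hX
  refine ⟨b * κ, _, hT, fun z hz F hF0 hF => ?_⟩
  have hXm : Measurable fun y => X y z := (hX.comp (Continuous.prodMk_left z)).measurable
  have hFT := hF.integrableOn_isCompact hT
  have hmaps : MapsTo (fun y => X y z) (tsupport u) (Function.uncurry X '' tsupport u ×ˢ K) :=
    fun y hy => ⟨(y, z), ⟨hy, hz⟩, rfl⟩
  have hFX : IntegrableOn (fun y => F (X y z)) (tsupport u) :=
    (integrableOn_comp_of_antilipschitzWith (hXκ z) hXm hT.measurableSet hFT).mono_set hmaps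
  calc ∫ y, |u y| * F (X y z)
      = ∫ y in tsupport u, |u y| * F (X y z) :=
        (setIntegral_eq_integral_of_forall_compl_eq_zero fun y hy => by
          rw [image_eq_zero_of_notMem_tsupport hy, abs_zero, zero_mul]).symm
    _ ≤ ∫ y in tsupport u, b * F (X y z) :=
        integral_mono_of_nonneg (ae_of_all _ fun y => mul_nonneg (abs_nonneg _) (hF0 _))
          (hFX.const_mul b) (ae_of_all _ fun y => mul_le_mul_of_nonneg_right (hb y) (hF0 _))
    _ ≤ b * (κ * ∫ x in Function.uncurry X '' tsupport u ×ˢ K, F x) := by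
        rw [integral_const_mul]
        exact mul_le_mul_of_nonneg_left
          (setIntegral_comp_le_of_antilipschitzWith (hXκ z) hXm hF0 hmaps hT.measurableSet hFT)
          ((norm_nonneg _).trans (hb 0))
    _ = b * κ * ∫ x in Function.uncurry X '' tsupport u ×ˢ K, F x := (mul_assoc _ _ _).symm

theorem eventually_integral_abs_mul_norm_comp_lt (hX : Continuous (Function.uncurry X))
    (hXκ : ∀ z, AntilipschitzWith κ fun y => X y z) (hK : IsCompact K) {ι : Type*} {l : Filter ι}
    [l.IsCountablyGenerated] {f : ι → ℝ → E} (hf : ∀ n, AEStronglyMeasurable (f n)) {c : ℝ}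
    (hfc : ∀ n, ∀ᵐ x, ‖f n x‖ ≤ c) (hlim : ∀ᵐ x, Tendsto (fun n => f n x) l (𝓝 0))
    {B : ℝ → ℝ} (hB : Integrable B) {δ : ℝ} (hδ : 0 < δ) :
    ∀ᶠ n in l, ∀ z ∈ K, ∫ y, |B y| * ‖f n (X y z)‖ < δ := by
  -- For compactly supported weights only the values of `X` on a compact set matter, and there
  -- almost everywhere convergence is convergence in `L¹`.
  obtain ⟨η, hη, hcη⟩ : ∃ η > 0, c * η < δ / 2 := exists_pos_mul_lt (half_pos hδ) c
  obtain ⟨u, hu_supp, hBu, hu, hui⟩ := hB.exists_hasCompactSupport_integral_sub_le hη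
  obtain ⟨A, T, hT, hAT⟩ := exists_isCompact_integral_abs_mul_comp_le hX hXκ hK hu hu_supp
  have : IsFiniteMeasure (volume.restrict T) := isFiniteMeasure_restrict.2 hT.measure_lt_top.ne
  have hlocal : Tendsto (fun n => A * ∫ x in T, ‖f n x‖) l (𝓝 0) := by
    simpa only [mul_zero] using (tendsto_integral_norm_of_tendsto_ae (fun n => (hf n).restrict)
      (fun n => ae_restrict_of_ae (hfc n)) (ae_restrict_of_ae hlim)).const_mul A
  filter_upwards [hlocal.eventually_lt_const (half_pos hδ)] with n hn z hz
  have hc : 0 ≤ c := by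
    obtain ⟨x, hx⟩ := (hfc n).exists
    exact (norm_nonneg _).trans hx
  have hXz : Continuous fun y => X y z := hX.comp (Continuous.prodMk_left z)
  have hqmp := quasiMeasurePreserving_of_antilipschitzWith (hXκ z) hXz.measurable
  have hloc : LocallyIntegrable fun x => ‖f n x‖ :=
    (memLp_top_of_bound (hf n).norm c (by simpa only [norm_norm] using hfc n)).locallyIntegrable
      le_top
  calc ∫ y, |B y| * ‖f n (X y z)‖
      ≤ c * (∫ y, |B y - u y|) + ∫ y, |u y| * ‖f n (X y z)‖ :=
        integral_abs_mul_norm_le_add hB hui ((hf n).comp_quasiMeasurePreserving hqmp)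
          (hqmp.ae (hfc n))
    _ ≤ c * η + A * ∫ x in T, ‖f n x‖ := by
        gcongr
        exacts [hBu, hAT z hz _ (fun x => norm_nonneg _) hloc]
    _ < δ := by linarith

theorem tendstoUniformlyOn_integral_smul_comp [NormedSpace ℝ E]
    (hX : Continuous (Function.uncurry X))
    (hXκ : ∀ z, AntilipschitzWith κ fun y => X y z) (hK : IsCompact K) {ι : Type*} {l : Filter ι}
    [l.IsCountablyGenerated] {G : ι → ℝ → E} (hG : ∀ n, AEStronglyMeasurable (G n)) {g : ℝ → E}
    (hg : AEStronglyMeasurable g) {c : ℝ} (hGc : ∀ n, ∀ᵐ x, ‖G n x‖ ≤ c)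
    (hgc : ∀ᵐ x, ‖g x‖ ≤ c) (hlim : ∀ᵐ x, Tendsto (fun n => G n x) l (𝓝 (g x)))
    {u : ℝ → Z → ℝ} (hu : ∀ z, Integrable fun y => u y z) {B : ℝ → ℝ} (hB : Integrable B)
    (huB : ∀ y z, |u y z| ≤ B y) :
    TendstoUniformlyOn (fun n z => ∫ y, u y z • G n (X y z)) (fun z => ∫ y, u y z • g (X y z))
      l K := by
  refine Metric.tendstoUniformlyOn_iff.2 fun δ hδ => ?_
  have hdiff : ∀ n, AEStronglyMeasurable fun x => g x - G n x := fun n => hg.sub (hG n)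
  have hdiffc : ∀ n, ∀ᵐ x, ‖g x - G n x‖ ≤ c + c := fun n => by
    filter_upwards [hgc, hGc n] with x hgx hGx
    exact (norm_sub_le _ _).trans (add_le_add hgx hGx)
  have hdiff_lim : ∀ᵐ x, Tendsto (fun n => g x - G n x) l (𝓝 0) :=
    hlim.mono fun x hx => by simpa only [sub_self] using hx.const_sub (g x)
  filter_upwards [eventually_integral_abs_mul_norm_comp_lt hX hXκ hK hdiff hdiffc hdiff_lim hB hδ]
    with n hn z hz
  have hXm : Measurable fun y => X y z := (hX.comp (Continuous.prodMk_left z)).measurable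
  rw [dist_eq_norm, ← integral_sub
    (integrable_smul_comp_of_antilipschitzWith (hXκ z) hXm hg hgc (hu z))
    (integrable_smul_comp_of_antilipschitzWith (hXκ z) hXm (hG n) (hGc n) (hu z))]
  refine (norm_integral_le_of_norm_le ?_ (ae_of_all _ fun y => ?_)).trans_lt (hn z hz)
  · simpa only [norm_smul, Real.norm_eq_abs] using
      (integrable_smul_comp_of_antilipschitzWith (hXκ z) hXm (hdiff n) (hdiffc n) hB).norm
  · rw [← smul_sub, norm_smul]
    gcongr
    exact (huB y z).trans (le_abs_self _)

end UniformConvergence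

variable [NormedSpace ℝ E]

section Mollification

theorem norm_convolution_lsmul_le {f : ℝ → ℝ} (hf : Integrable f) {g : ℝ → E} {c : ℝ}
    (hgc : ∀ᵐ x, ‖g x‖ ≤ c) (x : ℝ) :
    ‖(f ⋆[ContinuousLinearMap.lsmul ℝ ℝ, volume] g) x‖ ≤ (∫ t, |f t|) * c := by
  rw [convolution_lsmul, ← integral_mul_const]
  refine norm_integral_le_of_norm_le (hf.abs.mul_const c) ?_
  filter_upwards [(quasiMeasurePreserving_sub_left volume x).ae hgc] with t ht
  rw [norm_smul]
  exact mul_le_mul_of_nonneg_left ht (abs_nonneg _)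

theorem exists_differentiable_tendsto_ae [CompleteSpace E] {g : ℝ → E}
    (hg : AEStronglyMeasurable g) {c : ℝ} (hgc : ∀ᵐ x, ‖g x‖ ≤ c) :
    ∃ G : ℕ → ℝ → E, (∀ n, Differentiable ℝ (G n)) ∧ (∀ n x, ‖G n x‖ ≤ c) ∧
      (∀ n, ∃ D, ∀ x, ‖deriv (G n) x‖ ≤ D) ∧
      ∀ᵐ x, Tendsto (fun n => G n x) atTop (𝓝 (g x)) := by
  have hloc : LocallyIntegrable g := (memLp_top_of_bound hg c hgc).locallyIntegrable le_top
  let ψ : ℕ → ContDiffBump (0 : ℝ) := fun n =>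
    { rIn := 1 / ((n : ℝ) + 1)
      rOut := 2 * (1 / ((n : ℝ) + 1))
      rIn_pos := by positivity
      rIn_lt_rOut := lt_two_mul_self (by positivity) }
  have hsmooth : ∀ n, ContDiff ℝ 1 ((ψ n).normed volume) := fun n => (ψ n).contDiff_normed
  have hderiv : ∀ n x, HasDerivAt
      ((ψ n).normed volume ⋆[ContinuousLinearMap.lsmul ℝ ℝ, volume] g)
      ((deriv ((ψ n).normed volume) ⋆[ContinuousLinearMap.lsmul ℝ ℝ, volume] g) x) x :=
    fun n x => (ψ n).hasCompactSupport_normed.hasDerivAt_convolution_left _ (hsmooth n) hloc x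
  refine ⟨fun n => (ψ n).normed volume ⋆[ContinuousLinearMap.lsmul ℝ ℝ, volume] g,
    fun n x => (hderiv n x).differentiableAt, fun n x => ?_, fun n => ?_, ?_⟩
  · refine (norm_convolution_lsmul_le (ψ n).integrable_normed hgc x).trans_eq ?_
    simp_rw [abs_of_nonneg ((ψ n).nonneg_normed _), (ψ n).integral_normed, one_mul]
  · have h_int : Integrable (deriv ((ψ n).normed volume)) :=
      ((hsmooth n).continuous_deriv le_rfl).integrable_of_hasCompactSupport
        (ψ n).hasCompactSupport_normed.deriv
    exact ⟨_, fun x => (hderiv n x).deriv ▸ norm_convolution_lsmul_le h_int hgc x⟩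
  · refine ContDiffBump.ae_convolution_tendsto_right_of_locallyIntegrable (K := 2) ?_
      (Eventually.of_forall fun n => le_rfl) hloc
    simpa [ψ] using (tendsto_one_div_add_atTop_nhds_zero_nat (𝕜 := ℝ)).const_mul 2

end Mollification

section IntegrationByParts

theorem integral_smul_deriv_comp_eq_neg {G : ℝ → E} (hG : Differentiable ℝ G) {c : ℝ}
    (hGc : ∀ x, ‖G x‖ ≤ c) {f f' v w : ℝ → ℝ} (hf : ∀ y, HasDerivAt f (f' y) y)
    (hv : ∀ y, HasDerivAt v (w y) y) (hvi : Integrable v) (hwi : Integrable w)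
    (h_int : Integrable fun y => (f' y * v y) • deriv G (f y)) :
    ∫ y, (f' y * v y) • deriv G (f y) = -∫ y, w y • G (f y) := by
  have hG_int : ∀ {u : ℝ → ℝ}, Integrable u → Integrable fun y => u y • G (f y) := fun hu =>
    hu.smul_bdd c
      (hG.continuous.comp_aestronglyMeasurable
        (continuous_iff_continuousAt.2 fun y => (hf y).continuousAt).aestronglyMeasurable)
      (ae_of_all _ fun y => hGc _)
  have hderiv : ∀ y, HasDerivAt (fun y => v y • G (f y))
      ((f' y * v y) • deriv G (f y) + w y • G (f y)) y := fun y =>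
    ((hv y).smul ((hG (f y)).hasDerivAt.scomp y (hf y))).congr_deriv (by
      rw [smul_smul, mul_comm (v y)]; rfl)
  have hzero := integral_eq_zero_of_hasDerivAt_of_integrable hderiv (h_int.add (hG_int hwi))
    (hG_int hvi)
  rwa [integral_add h_int (hG_int hwi), add_eq_zero_iff_eq_neg] at hzero

theorem hasDerivAt_integral_smul_comp_of_differentiable [CompleteSpace E] {G : ℝ → E}
    (hG : Differentiable ℝ G) {c D : ℝ} (hGc : ∀ x, ‖G x‖ ≤ c) (hGD : ∀ x, ‖deriv G x‖ ≤ D)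
    {X Q : ℝ → ℝ → ℝ} (hX : ∀ z, Continuous fun y => X y z)
    (hXz : ∀ y z, HasDerivAt (X y) (Q y z) z) {φ b : ℝ → ℝ} (hφ : Integrable φ)
    (hb : Integrable b) (hQb : ∀ y z, |Q y z * φ y| ≤ b y) {z : ℝ} {P v w : ℝ → ℝ}
    (hXy : ∀ y, HasDerivAt (fun y' => X y' z) (P y) y) (hv : ∀ y, HasDerivAt v (w y) y)
    (hPv : ∀ y, P y * v y = Q y z * φ y) (hvi : Integrable v) (hwi : Integrable w) :
    HasDerivAt (fun z => ∫ y, φ y • G (X y z)) (-∫ y, w y • G (X y z)) z := by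
  have hGX : ∀ z, AEStronglyMeasurable (fun y => G (X y z)) := fun z =>
    (hG.continuous.comp (hX z)).aestronglyMeasurable
  have hchain : ∀ y, v y • deriv (G ∘ fun y' => X y' z) y = (Q y z * φ y) • deriv G (X y z) :=
    fun y => by
      rw [((hG (X y z)).hasDerivAt.scomp y (hXy y)).deriv, smul_smul, mul_comm, hPv]
  have hmeas : AEStronglyMeasurable fun y => (Q y z * φ y) • deriv G (X y z) := by
    simp_rw [← hchain]
    exact hvi.aestronglyMeasurable.smul (aestronglyMeasurable_deriv _ _)
  obtain ⟨h_int, hderiv⟩ := hasDerivAt_integral_of_dominated_loc_of_deriv_le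
    (F := fun z y => φ y • G (X y z)) (F' := fun z y => (Q y z * φ y) • deriv G (X y z))
    (bound := fun y => b y * D) (μ := volume) (x₀ := z) univ_mem
    (Eventually.of_forall fun z => hφ.aestronglyMeasurable.smul (hGX z))
    (hφ.smul_bdd c (hGX z) (ae_of_all _ fun y => hGc _)) hmeas
    (ae_of_all _ fun y z _ => by
      rw [norm_smul]
      exact mul_le_mul (hQb y z) (hGD _) (norm_nonneg _) ((abs_nonneg _).trans (hQb y z)))
    (hb.mul_const D)
    (ae_of_all _ fun y z _ => by
      rw [mul_comm, mul_smul]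
      exact ((hG _).hasDerivAt.scomp z (hXz y z)).const_smul (φ y))
  simp_rw [← hPv] at h_int hderiv
  rwa [integral_smul_deriv_comp_eq_neg hG hGc hXy hv hvi hwi h_int] at hderiv

theorem hasDerivAt_integral_smul_comp [CompleteSpace E] {g : ℝ → E}
    (hg : AEStronglyMeasurable g) {c : ℝ} (hgc : ∀ᵐ x, ‖g x‖ ≤ c) {X P Q : ℝ → ℝ → ℝ}
    (hX : Continuous (Function.uncurry X)) (hXy : ∀ y z, HasDerivAt (fun y' => X y' z) (P y z) y)
    (hXz : ∀ y z, HasDerivAt (X y) (Q y z) z) {ε : ℝ} (hε : 0 < ε) (hεP : ∀ y z, ε ≤ P y z)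
    {φ b B : ℝ → ℝ} (hφ : Integrable φ) (hb : Integrable b) (hQb : ∀ y z, |Q y z * φ y| ≤ b y)
    {w : ℝ → ℝ → ℝ} (hw : ∀ y z, HasDerivAt (fun y' => Q y' z / P y' z * φ y') (w y z) y)
    (hB : Integrable B) (hwB : ∀ y z, |w y z| ≤ B y) (z : ℝ) :
    HasDerivAt (fun z => ∫ y, φ y • g (X y z)) (-∫ y, w y z • g (X y z)) z := by
  have hXκ : ∀ z, AntilipschitzWith (ε⁻¹).toNNReal fun y => X y z := fun z =>
    antilipschitzWith_of_le_deriv (fun y => (hXy y z).differentiableAt) hε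
      fun y => (hXy y z).deriv ▸ hεP y z
  have hv_int : ∀ z, Integrable fun y => Q y z / P y z * φ y := fun z => by
    refine (hb.div_const ε).mono'
      (continuous_iff_continuousAt.2 fun y => (hw y z).continuousAt).aestronglyMeasurable
      (ae_of_all _ fun y => ?_)
    rw [div_mul_eq_mul_div, norm_div, Real.norm_of_nonneg (hε.le.trans (hεP y z))]
    exact div_le_div₀ ((abs_nonneg _).trans (hQb y z)) (hQb y z) hε (hεP y z)
  have hw_int : ∀ z, Integrable fun y => w y z := fun z => by
    refine hB.mono' ?_ (ae_of_all _ (hwB · z))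
    simp_rw [← fun y => (hw y z).deriv]
    exact aestronglyMeasurable_deriv _ _
  obtain ⟨G, hG, hGc, hGD, hlim⟩ := exists_differentiable_tendsto_ae hg hgc
  have hunif : ∀ {u : ℝ → ℝ → ℝ} {b : ℝ → ℝ}, (∀ z, Integrable fun y => u y z) → Integrable b →
      (∀ y z, |u y z| ≤ b y) → TendstoLocallyUniformly (fun n z => ∫ y, u y z • G n (X y z))
        (fun z => ∫ y, u y z • g (X y z)) atTop := fun hu hb hub =>
    tendstoLocallyUniformly_iff_forall_isCompact.2 fun K hK =>
      tendstoUniformlyOn_integral_smul_comp hX hXκ hK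
        (fun n => (hG n).continuous.aestronglyMeasurable) hg (fun n => ae_of_all _ (hGc n)) hgc
        hlim hu hb hub
  have hφ_lim := hunif (u := fun y _ => φ y) (fun _ => hφ) hφ.abs fun y _ => le_rfl
  refine hasDerivAt_of_tendstoLocallyUniformlyOn isOpen_univ
    (tendstoLocallyUniformlyOn_univ.2 (hunif hw_int hB hwB).neg)
    (Eventually.of_forall fun n z _ => ?_)
    (fun z hz => hφ_lim.tendstoLocallyUniformlyOn.tendsto_at hz) (mem_univ z)
  obtain ⟨D, hD⟩ := hGD n
  refine hasDerivAt_integral_smul_comp_of_differentiable (hG n) (hGc n) hD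
    (fun z => hX.comp (Continuous.prodMk_left z)) hXz hφ hb hQb (fun y => hXy y z)
    (fun y => hw y z) (fun y => ?_) (hv_int z) (hw_int z)
  rw [← mul_assoc, mul_div_cancel₀ _ (hε.trans_le (hεP y z)).ne']

end IntegrationByParts

section Gaussian

theorem stdGaussPDF_eq_gaussianPDFReal : stdGaussPDF = ProbabilityTheory.gaussianPDFReal 0 1 := by
  ext y
  simp [stdGaussPDF, ProbabilityTheory.gaussianPDFReal]

theorem stdGaussPDF_nonneg (y : ℝ) : 0 ≤ stdGaussPDF y := by
  unfold stdGaussPDF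
  positivity

theorem hasDerivAt_stdGaussPDF (y : ℝ) : HasDerivAt stdGaussPDF (-y * stdGaussPDF y) y := by
  have hsq : HasDerivAt (fun x : ℝ => -x ^ 2 / 2) (-y) y :=
    ((hasDerivAt_pow 2 y).neg.div_const 2).congr_deriv (by ring)
  exact (hsq.exp.const_mul (Real.sqrt (2 * Real.pi))⁻¹).congr_deriv (by rw [stdGaussPDF]; ring)

theorem integrable_one_add_abs_pow_mul_stdGaussPDF (N : ℕ) :
    Integrable fun y : ℝ => (1 + |y|) ^ N * stdGaussPDF y := by
  have hmoment : Integrable (fun y : ℝ => (1 + |y|) ^ N) (ProbabilityTheory.gaussianReal 0 1) := by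
    have h := ((memLp_const (1 : ℝ)).add
      (ProbabilityTheory.memLp_id_gaussianReal (μ := 0) (v := 1) N).norm).integrable_norm_pow'
    refine h.congr (ae_of_all _ fun y => ?_)
    simp only [Pi.add_apply, id_eq, Real.norm_eq_abs]
    rw [abs_of_nonneg (by positivity)]
  rw [ProbabilityTheory.gaussianReal_of_var_ne_zero _ one_ne_zero,
    integrable_withDensity_iff_integrable_smul' (ProbabilityTheory.measurable_gaussianPDF 0 1)
      (ae_of_all _ fun y => ProbabilityTheory.gaussianPDF_lt_top)] at hmoment
  simpa only [ProbabilityTheory.toReal_gaussianPDF, smul_eq_mul, mul_comm,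
    stdGaussPDF_eq_gaussianPDFReal] using hmoment

theorem hasDerivAt_div_mul_stdGaussPDF {p q : ℝ → ℝ} {p' q' y : ℝ} (hp : HasDerivAt p p' y)
    (hq : HasDerivAt q q' y) (hp0 : p y ≠ 0) :
    HasDerivAt (fun y => q y / p y * stdGaussPDF y)
      ((q' / p y - q y / p y * (p' / p y) - y * (q y / p y)) * stdGaussPDF y) y :=
  ((hq.div hp hp0).mul (hasDerivAt_stdGaussPDF y)).congr_deriv (by
    simp only [Pi.div_apply]
    field_simp
    ring)

theorem exists_integrable_abs_deriv_div_mul_stdGaussPDF_le {ε : ℝ} (hε : 0 < ε) (C : ℝ) (m : ℕ) :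
    ∃ B : ℝ → ℝ, Integrable B ∧ ∀ p q : ℝ → ℝ, Differentiable ℝ p → Differentiable ℝ q →
      (∀ y, ε ≤ p y) → (∀ y, |q y| ≤ C * (1 + |y|) ^ m) → (∀ y, |deriv q y| ≤ C * (1 + |y|) ^ m) →
      (∀ y, |deriv p y| ≤ C * (1 + |y|) ^ m) →
      ∀ y, |deriv (fun y' => q y' / p y' * stdGaussPDF y') y| ≤ B y := by
  refine ⟨fun y => C / ε * ((1 + |y|) ^ m * stdGaussPDF y) +
      (C / ε) ^ 2 * ((1 + |y|) ^ (2 * m) * stdGaussPDF y) +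
      C / ε * ((1 + |y|) ^ (m + 1) * stdGaussPDF y),
    (((integrable_one_add_abs_pow_mul_stdGaussPDF _).const_mul _).add
      ((integrable_one_add_abs_pow_mul_stdGaussPDF _).const_mul _)).add
      ((integrable_one_add_abs_pow_mul_stdGaussPDF _).const_mul _), ?_⟩
  intro p q hp hq hεp hqC hqC' hpC' y
  have hp0 : 0 < p y := hε.trans_le (hεp y)
  have hφ := stdGaussPDF_nonneg y
  set r := C / ε * (1 + |y|) ^ m
  have hdiv : ∀ {a : ℝ}, |a| ≤ C * (1 + |y|) ^ m → |a / p y| ≤ r := fun {a} ha => by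
    rw [abs_div, abs_of_pos hp0]
    exact (div_le_div₀ ((abs_nonneg a).trans ha) ha hε (hεp y)).trans_eq (mul_div_right_comm _ _ _)
  have hr : 0 ≤ r := (abs_nonneg _).trans (hdiv (hqC y))
  rw [(hasDerivAt_div_mul_stdGaussPDF (hp y).hasDerivAt (hq y).hasDerivAt hp0.ne').deriv, abs_mul,
    abs_of_nonneg hφ]
  calc |deriv q y / p y - q y / p y * (deriv p y / p y) - y * (q y / p y)| * stdGaussPDF y
      ≤ (|deriv q y / p y| + |q y / p y| * |deriv p y / p y| + |y| * |q y / p y|) *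
          stdGaussPDF y := by
        rw [← abs_mul, ← abs_mul]
        gcongr
        exact (abs_sub _ _).trans (add_le_add_left (abs_sub _ _) _)
    _ ≤ (r + r * r + (1 + |y|) * r) * stdGaussPDF y := by
        gcongr
        exacts [hdiv (hqC' y), hdiv (hqC y), hdiv (hpC' y), le_add_of_nonneg_left zero_le_one,
          hdiv (hqC y)]
    _ = _ := by ring

end Gaussian

theorem contDiff_deriv_of_uncurry {X : ℝ → ℝ → E} {n k : WithTop ℕ∞}
    (hX : ContDiff ℝ n (Function.uncurry X)) (hk : k + 1 ≤ n) (z : ℝ) :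
    ContDiff ℝ k fun y => deriv (X y) z := by
  simpa only [fderiv_apply_one_eq_deriv] using
    (hX.fderiv contDiff_const hk).clm_apply (contDiff_const (c := (1 : ℝ)))

theorem smoothing_by_parts_general [CompleteSpace E] (g : ℝ → E) (hg : AEStronglyMeasurable g)
    (Cg : ℝ) (hgb : ∀ᵐ x, ‖g x‖ ≤ Cg)
    (X : ℝ → ℝ → ℝ) (hX : ContDiff ℝ 2 fun q : ℝ × ℝ => X q.1 q.2)
    (ε : ℝ) (hε : 0 < ε) (hXy : ∀ y z, ε ≤ deriv (fun y' => X y' z) y) (C : ℝ) (m : ℕ)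
    (hz : ∀ y z, |deriv (fun z' => X y z') z| ≤ C * (1 + |y|) ^ m)
    (hyz : ∀ y z, |deriv (fun y' => deriv (fun z' => X y' z') z) y| ≤ C * (1 + |y|) ^ m)
    (hyy : ∀ y z, |deriv (fun y' => deriv (fun y'' => X y'' z) y') y| ≤ C * (1 + |y|) ^ m)
    (z : ℝ) :
    HasDerivAt (fun z => ∫ y, stdGaussPDF y • g (X y z))
      (-∫ y, deriv (fun y' => (deriv (fun z' => X y' z') z / deriv (fun y'' => X y'' z) y') *
        stdGaussPDF y') y • g (X y z)) z := by
  have hXy₂ : ∀ z, ContDiff ℝ 2 fun y => X y z := fun z => hX.comp (contDiff_prodMk_left z)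
  have hXz₂ : ∀ y, ContDiff ℝ 2 (X y) := fun y => hX.comp (contDiff_prodMk_right y)
  have hP : ∀ z, Differentiable ℝ fun y => deriv (fun y' => X y' z) y := fun z =>
    (hXy₂ z).differentiable_deriv_two
  have hQ : ∀ z, Differentiable ℝ fun y => deriv (X y) z := fun z =>
    (contDiff_deriv_of_uncurry hX one_add_one_eq_two.le z).differentiable one_ne_zero
  have hφ := integrable_one_add_abs_pow_mul_stdGaussPDF
  obtain ⟨B, hB, hwB⟩ := exists_integrable_abs_deriv_div_mul_stdGaussPDF_le hε C m
  refine hasDerivAt_integral_smul_comp hg hgb hX.continuous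
    (fun y z => ((hXy₂ z).differentiable two_ne_zero y).hasDerivAt)
    (fun y z => ((hXz₂ y).differentiable two_ne_zero z).hasDerivAt) hε hXy
    (by simpa only [pow_zero, one_mul] using hφ 0) ((hφ m).const_mul C) (fun y z => ?_)
    (fun y z => ((hasDerivAt_div_mul_stdGaussPDF (hP z y).hasDerivAt (hQ z y).hasDerivAt
      (hε.trans_le (hXy y z)).ne').differentiableAt).hasDerivAt) hB
    (fun y z => hwB _ _ (hP z) (hQ z) (hXy · z) (hz · z) (hyz · z) (hyy · z) y) z
  rw [abs_mul, abs_of_nonneg (stdGaussPDF_nonneg y), ← mul_assoc]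
  exact mul_le_mul_of_nonneg_right (hz y z) (stdGaussPDF_nonneg y)

/-- integration-by-parts identity underlying Proposition 3.7: for a bounded
measurable `g` and a `C²` function `X(y,z)` with `∂_y X ≥ ε > 0` and polynomially bounded
derivatives `∂_z X`, `∂²_{yz} X`, `∂²_{yy} X`, the function
`h(z) = ∫ g(X(y,z)) φ(y) dy` is differentiable with
`h'(z) = -∫ g(X(y,z)) ∂/∂y [ (∂_z X / ∂_y X)(y,z) φ(y) ] dy`. -/
theorem smoothing_by_parts (g : ℝ → ℝ) (hg : Measurable g)
    (Cg : ℝ) (hgb : ∀ x, |g x| ≤ Cg)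
    (X : ℝ → ℝ → ℝ) (hX : ContDiff ℝ 2 fun q : ℝ × ℝ => X q.1 q.2)
    (ε : ℝ) (hε : 0 < ε) (hXy : ∀ y z, ε ≤ deriv (fun y' => X y' z) y)
    (C : ℝ) (hC : 0 ≤ C) (m : ℕ)
    (hz : ∀ y z, |deriv (fun z' => X y z') z| ≤ C * (1 + |y|) ^ m)
    (hyz : ∀ y z, |deriv (fun y' => deriv (fun z' => X y' z') z) y| ≤ C * (1 + |y|) ^ m)
    (hyy : ∀ y z, |deriv (fun y' => deriv (fun y'' => X y'' z) y') y| ≤ C * (1 + |y|) ^ m) :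
    Differentiable ℝ (fun z => ∫ y : ℝ, g (X y z) * stdGaussPDF y) ∧
    ∀ z, deriv (fun z' => ∫ y : ℝ, g (X y z') * stdGaussPDF y) z =
      -∫ y : ℝ, g (X y z) *
        deriv (fun y' =>
          (deriv (fun z' => X y' z') z / deriv (fun y'' => X y'' z) y') * stdGaussPDF y') y := by
  have hderiv := smoothing_by_parts_general g hg.aestronglyMeasurable Cg (ae_of_all _ hgb) X hX ε hε
    hXy C m hz hyz hyy
  simp only [smul_eq_mul, mul_comm _ (g _)] at hderiv
  exact ⟨fun z => (hderiv z).differentiableAt, fun z => (hderiv z).deriv⟩
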